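/- arXiv:2508.20132 — 2 statements merged into one kernel-verified Lean document; each statement's English description precedes it below -/
import Mathlib

section
/- Let $r \geq 1$ be an integer and let $A_1, \ldots, A_m$ be (not necessarily distinct) subsets of $[n]$ such that for every $t \geq 1$ and distinct indices $i_1, \ldots, i_t$, the intersection $A_{i_1} \cap \cdots \cap A_{i_t}$ does not have size exactly $t - 1 - r$. Then $m \leq n + r$. -/
open Finset

/-!
Write `C X T` for the set of points of `X` lying in every `A i`, `i ∈ T`. The core is the unshifted
theorem `card_le_of_card_ne`: if `|C X T| ≠ |T| - 1` for all nonempty `T ⊆ I`, then `|I| ≤ |X|`.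

It is proved by strong induction on `|X|`. Suppose `x ∈ X ∩ A i`. Let `X'` be `X ∩ A i` without `x`
and let `I'` be the set of indices `j ≠ i` with `x ∈ A j`. For nonempty `T ⊆ I'`, the set
`C X (T ∪ {i})` is `C X' T` together with `x`, so `|C X' T| ≠ |T| - 1`, and the induction hypothesis
gives `|I'| ≤ |X'|`. Hence the degree `d x` of `x` is at most `|X ∩ A i|` for every incident pair
`(i, x)`. Each `X ∩ A i` is nonempty (take `T = {i}` in the hypothesis), so
`|I| = ∑ i, ∑ x ∈ X ∩ A i, 1 / |X ∩ A i| ≤ ∑ x, ∑ i ∋ x, 1 / d x ≤ |X|`.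

The shifted theorem follows by fixing `r` of the sets and taking their intersection as the
ground set for the remaining `m - r` ones.
-/

/-- If every set has a point and the degree of a point is at most the size of any set containing
it, then there are at most as many sets as points. -/
lemma card_le_of_degree_le {ι α : Type*} [DecidableEq α] (A : ι → Finset α)
    (X : Finset α) (I : Finset ι) (hne : ∀ i ∈ I, {x ∈ X | x ∈ A i}.Nonempty)
    (hdeg : ∀ i ∈ I, ∀ x ∈ X, x ∈ A i → #{j ∈ I | x ∈ A j} ≤ #{y ∈ X | y ∈ A i}) :
    #I ≤ #X := by
  have key : (#I : ℚ) ≤ #X := by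
    calc (#I : ℚ) = ∑ i ∈ I, ∑ x ∈ X with x ∈ A i, (1 : ℚ) / #{y ∈ X | y ∈ A i} := by
          rw [card_eq_sum_ones, Nat.cast_sum]
          refine sum_congr rfl fun i hi => ?_
          have h0 : (#{y ∈ X | y ∈ A i} : ℚ) ≠ 0 := by
            exact_mod_cast (card_pos.2 (hne i hi)).ne'
          rw [sum_const, nsmul_eq_mul, mul_one_div_cancel h0, Nat.cast_one]
      _ ≤ ∑ i ∈ I, ∑ x ∈ X with x ∈ A i, (1 : ℚ) / #{j ∈ I | x ∈ A j} := by
          refine sum_le_sum fun i hi => sum_le_sum fun x hx => ?_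
          obtain ⟨hx, hxi⟩ := mem_filter.1 hx
          have h0 : 0 < #{j ∈ I | x ∈ A j} := card_pos.2 ⟨i, mem_filter.2 ⟨hi, hxi⟩⟩
          exact one_div_le_one_div_of_le (by exact_mod_cast h0)
            (by exact_mod_cast hdeg i hi x hx hxi)
      _ = ∑ x ∈ X, ∑ i ∈ I with x ∈ A i, (1 : ℚ) / #{j ∈ I | x ∈ A j} := by
          refine sum_comm' fun i x => ?_
          simp only [mem_filter]
          tauto
      _ ≤ ∑ x ∈ X, (1 : ℚ) := by
          refine sum_le_sum fun x _ => ?_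
          rw [sum_const, nsmul_eq_mul, mul_one_div]
          exact div_self_le_one _
      _ = #X := by simp
  exact_mod_cast key

/-- The Frankl–Katona theorem for the traces on `X` of the sets `A i`, `i ∈ I`. -/
lemma card_le_of_card_ne {ι α : Type*} [DecidableEq ι] [DecidableEq α] (A : ι → Finset α)
    (X : Finset α) (I : Finset ι)
    (h : ∀ T ⊆ I, T.Nonempty → #{x ∈ X | ∀ i ∈ T, x ∈ A i} + 1 ≠ #T) :
    #I ≤ #X := by
  induction hn : #X using Nat.strong_induction_on generalizing X I with
  | _ n ih =>
  subst hn
  refine card_le_of_degree_le A X I (fun i hi => ?_) fun i hi x hx hxi => ?_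
  · have := h {i} (singleton_subset_iff.2 hi) (singleton_nonempty i)
    rw [nonempty_iff_ne_empty]
    intro h0
    simp [h0] at this
  · have hxX : x ∈ {y ∈ X | y ∈ A i} := mem_filter.2 ⟨hx, hxi⟩
    have hiI : i ∈ {j ∈ I | x ∈ A j} := mem_filter.2 ⟨hi, hxi⟩
    have hX := card_erase_add_one hxX
    have hI := card_erase_add_one hiI
    have hle : #{y ∈ X | y ∈ A i} ≤ #X := card_filter_le _ _
    have := ih _ (by omega) ({y ∈ X | y ∈ A i}.erase x) ({j ∈ I | x ∈ A j}.erase i) ?_ rfl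
    · omega
    intro T hT _ hc
    have hiT : i ∉ T := fun hiT => (mem_erase.1 (hT hiT)).1 rfl
    have hTI : ∀ j ∈ T, j ∈ I ∧ x ∈ A j := fun j hj => mem_filter.1 (mem_erase.1 (hT hj)).2
    refine h (insert i T) (insert_subset hi fun j hj => (hTI j hj).1) (insert_nonempty _ _) ?_
    have hmem : x ∈ {y ∈ X | ∀ j ∈ insert i T, y ∈ A j} := by
      simp only [mem_filter, mem_insert, forall_eq_or_imp]
      exact ⟨hx, hxi, fun j hj => (hTI j hj).2⟩
    have heq : {y ∈ {y ∈ X | y ∈ A i}.erase x | ∀ j ∈ T, y ∈ A j}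
        = {y ∈ X | ∀ j ∈ insert i T, y ∈ A j}.erase x := by
      ext y
      simp only [mem_filter, mem_erase, mem_insert, forall_eq_or_imp]
      tauto
    rw [heq, card_erase_add_one hmem] at hc
    rw [card_insert_of_notMem hiT, hc]

/-- Shifted Frankl–Katona: if `r ≥ 1` and `A₁, …, A_m ⊆ [n]` are such that for every
nonempty collection of `t` distinct indices the corresponding intersection does not have
size exactly `t - 1 - r`, then `m ≤ n + r`. -/
theorem frankl_katona_shifted (n m r : ℕ) (hr : 1 ≤ r) (A : Fin m → Finset (Fin n))
    (h : ∀ T : Finset (Fin m), T.Nonempty →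
      ((T.inf A).card : ℤ) ≠ (T.card : ℤ) - 1 - (r : ℤ)) :
    m ≤ n + r := by
  rcases le_total m r with hmr | hmr
  · omega
  obtain ⟨R, -, hR⟩ := exists_subset_card_eq (s := (univ : Finset (Fin m))) (n := r) (by simpa)
  have key := card_le_of_card_ne A (R.inf A) Rᶜ ?_
  · have h1 : #(R.inf A) ≤ n := by simpa using card_le_univ (R.inf A)
    rw [card_compl, Fintype.card_fin] at key
    omega
  intro T hT hTne hc
  have hdisj : Disjoint R T := (disjoint_compl_right (a := R)).mono_right hT
  refine h (R ∪ T) (hTne.mono subset_union_right) ?_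
  have heq : (R ∪ T).inf A = {x ∈ R.inf A | ∀ i ∈ T, x ∈ A i} := by
    ext x
    simp only [mem_inf, mem_filter, mem_union, or_imp, forall_and]
  have hc' : #{x ∈ R.inf A | ∀ i ∈ T, x ∈ A i} + 1 = #T := by convert hc
  rw [heq, card_union_of_disjoint hdisj]
  push_cast
  omega
end

section
/- Let $k \geq 3$ and let $\mathcal{J} \subseteq 2^{[k]}$ be a family of proper subsets of $[k]$ that is closed under pairwise intersection and has rank at least $k-1$ (every subset of $[k]$ of size at most $k-2$ is contained in some member of $\mathcal{J}$). Then either (1) there exists $B \subseteq [k]$ with $|B| = k-2$ such that every subset of $B$ belongs to $\mathcal{J}$, or (2) there exists a unique $i \in [k]$ such that every proper subset $F \subsetneq [k]$ with $i \in F$ belongs to $\mathcal{J}$, and moreover every $D \subseteq [k] \setminus \{i\}$ with $|D| \geq k-2$ satisfies $D \notin \mathcal{J}$. -/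
open Finset

/-!
Call `i` *bad* if `{i}ᶜ ∉ 𝒥`. A finite intersection-closed family contains every `F ≠ univ` that it
separates from each point outside `F` (`mem_of_separated`), and the rank condition gives
`{a, b}ᶜ ∈ 𝒥` for any two distinct bad points (`pair_compl_mem`). The number of bad points then
decides the outcome.

* Two bad points `a ≠ b`: a subset of `B = {a, b}ᶜ` is separated from a good point `w` by `{w}ᶜ`,
  and from a bad point `w` by `{w, a}ᶜ` or `{w, b}ᶜ`, so every subset of `B` is in `𝒥`.
* No bad point: every proper subset is in `𝒥`.
* Exactly one bad point `i`: every proper subset containing `i` is in `𝒥`. If some `D ∌ i` with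
  `|D| ≥ k - 2` is in `𝒥`, then `|D| = k - 2` and each `S ⊆ D` is `insert i S ∩ D`, so `B = D` works;
  otherwise `i` is the point required by the second alternative.
-/

/-- In a finite intersection-closed family, a set `F ≠ univ` that is separated from every outside
point by a member is itself a member: it is the intersection of all members containing it. -/
theorem mem_of_separated {α : Type*} [Fintype α] [DecidableEq α] {𝒥 : Finset (Finset α)}
    (hclosed : ∀ J₁ ∈ 𝒥, ∀ J₂ ∈ 𝒥, J₁ ∩ J₂ ∈ 𝒥) {F : Finset α} (hF : F ≠ univ)
    (hsep : ∀ w, w ∉ F → ∃ Q ∈ 𝒥, F ⊆ Q ∧ w ∉ Q) : F ∈ 𝒥 := by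
  have hne : (𝒥.filter (F ⊆ ·)).Nonempty := by
    obtain ⟨w, hw⟩ : ∃ w, w ∉ F := by
      by_contra! h
      exact hF (eq_univ_iff_forall.2 h)
    obtain ⟨Q, hQ, hFQ, -⟩ := hsep w hw
    exact ⟨Q, mem_filter.2 ⟨hQ, hFQ⟩⟩
  have hmem : (𝒥.filter (F ⊆ ·)).inf' hne id ∈ 𝒥 :=
    inf'_induction hne id (p := (· ∈ 𝒥)) hclosed fun J hJ => (mem_filter.1 hJ).1
  have heq : (𝒥.filter (F ⊆ ·)).inf' hne id = F := by
    apply subset_antisymm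
    · intro w hw
      by_contra hwF
      obtain ⟨Q, hQ, hFQ, hwQ⟩ := hsep w hwF
      exact hwQ (inf'_le (f := id) (mem_filter.2 ⟨hQ, hFQ⟩) hw)
    · exact le_inf' hne id fun J hJ => (mem_filter.1 hJ).2
  rwa [heq] at hmem

theorem pair_compl_mem {k : ℕ} {𝒥 : Finset (Finset (Fin k))}
    (hproper : ∀ J ∈ 𝒥, J ≠ univ)
    (hrank : ∀ S : Finset (Fin k), S.card ≤ k - 2 → ∃ J ∈ 𝒥, S ⊆ J)
    {a b : Fin k} (hab : a ≠ b) (ha : {a}ᶜ ∉ 𝒥) (hb : {b}ᶜ ∉ 𝒥) :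
    ({a, b} : Finset (Fin k))ᶜ ∈ 𝒥 := by
  obtain ⟨J, hJ, hsub⟩ := hrank {a, b}ᶜ (by rw [card_compl, card_pair hab, Fintype.card_fin])
  have hmem : ∀ x, x ≠ a → x ≠ b → x ∈ J := fun x hxa hxb => hsub (by simp [hxa, hxb])
  -- `J` is one of `univ`, `{a}ᶜ`, `{b}ᶜ`, `{a, b}ᶜ`, according to whether it contains `a` and `b`.
  have haJ : a ∉ J := fun h => by
    by_cases h' : b ∈ J
    · exact hproper J hJ (by ext x; grind [mem_compl])
    · exact hb (by convert hJ; ext x; grind [mem_compl])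
  have hbJ : b ∉ J := fun h => ha (by convert hJ; ext x; grind [mem_compl])
  convert hJ
  ext x
  grind [mem_compl]

/-- Jiang–Longbrake intersection structure lemma: let `k ≥ 3` and let `𝒥` be an
intersection-closed family of proper subsets of `[k]` of rank at least `k-1` (every set
of size at most `k-2` lies in some member). Then either some `(k-2)`-set `B` has all its
subsets in `𝒥`, or there is a unique `i` such that every proper subset containing `i`
is in `𝒥` while no `D ⊆ [k] \ {i}` with `|D| ≥ k-2` is in `𝒥`. -/
theorem intersection_structure_lemma (k : ℕ) (hk : 3 ≤ k)
    (𝒥 : Finset (Finset (Fin k)))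
    (hproper : ∀ J ∈ 𝒥, J ≠ Finset.univ)
    (hclosed : ∀ J₁ ∈ 𝒥, ∀ J₂ ∈ 𝒥, J₁ ∩ J₂ ∈ 𝒥)
    (hrank : ∀ S : Finset (Fin k), S.card ≤ k - 2 → ∃ J ∈ 𝒥, S ⊆ J) :
    (∃ B : Finset (Fin k), B.card = k - 2 ∧ ∀ S ⊆ B, S ∈ 𝒥) ∨
    (∃! i : Fin k,
      (∀ F : Finset (Fin k), F ≠ Finset.univ → i ∈ F → F ∈ 𝒥) ∧
      (∀ D : Finset (Fin k), i ∉ D → k - 2 ≤ D.card → D ∉ 𝒥)) := by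
  by_cases htwo : ∃ a b : Fin k, a ≠ b ∧ {a}ᶜ ∉ 𝒥 ∧ {b}ᶜ ∉ 𝒥
  · obtain ⟨a, b, hab, ha, hb⟩ := htwo
    refine Or.inl ⟨{a, b}ᶜ, by rw [card_compl, card_pair hab, Fintype.card_fin], fun S hS => ?_⟩
    have haS : a ∉ S := fun h => by simpa using hS h
    have hbS : b ∉ S := fun h => by simpa using hS h
    have hpair : ∀ {u v : Fin k}, u ∉ S → v ∉ S → S ⊆ {u, v}ᶜ := fun hu hv x hx => by
      simp only [mem_compl, mem_insert, mem_singleton]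
      rintro (rfl | rfl) <;> contradiction
    refine mem_of_separated hclosed (fun h => haS (h ▸ mem_univ a)) fun w hw => ?_
    by_cases hwJ : {w}ᶜ ∈ 𝒥
    · exact ⟨_, hwJ, subset_compl_singleton.2 hw, by simp⟩
    by_cases hwa : w = a
    · exact ⟨_, pair_compl_mem hproper hrank (hwa ▸ hab) hwJ hb, hpair hw hbS, by simp⟩
    · exact ⟨_, pair_compl_mem hproper hrank hwa hwJ ha, hpair hw haS, by simp⟩
  by_cases hone : ∃ i : Fin k, {i}ᶜ ∉ 𝒥
  · obtain ⟨i, hi⟩ := hone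
    have hgood : ∀ w, w ≠ i → {w}ᶜ ∈ 𝒥 := fun w hw => by
      by_contra h
      exact htwo ⟨w, i, hw, h, hi⟩
    have hup : ∀ F : Finset (Fin k), F ≠ univ → i ∈ F → F ∈ 𝒥 := fun F hF hiF =>
      mem_of_separated hclosed hF fun w hw =>
        ⟨_, hgood w (fun h => hw (h ▸ hiF)), subset_compl_singleton.2 hw, by simp⟩
    by_cases hD : ∃ D ∈ 𝒥, i ∉ D ∧ k - 2 ≤ D.card
    · obtain ⟨D, hDJ, hiD, hcard⟩ := hD
      have hsub : D ⊆ {i}ᶜ := subset_compl_singleton.2 hiD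
      have hlt : D.card < ({i}ᶜ : Finset (Fin k)).card :=
        card_lt_card (hsub.ssubset_of_ne fun h => hi (h ▸ hDJ))
      have hDcard : D.card = k - 2 := by
        simp [card_compl] at hlt
        omega
      refine Or.inl ⟨D, hDcard, fun S hS => ?_⟩
      have hins : insert i S ≠ univ := fun h => by
        have h1 := card_le_card (insert_subset_insert i hS)
        have h2 := card_insert_le i D
        rw [h, card_univ, Fintype.card_fin] at h1
        omega
      have hinter := hclosed _ (hup _ hins (mem_insert_self i S)) D hDJ
      rwa [insert_inter_of_notMem hiD, inter_eq_left.2 hS] at hinter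
    · refine Or.inr ⟨i, ⟨hup, fun D hiD hc hDJ => hD ⟨D, hDJ, hiD, hc⟩⟩, fun j hj => ?_⟩
      by_contra hji
      exact hi (hj.1 _ (by simp) (by simp [hji]))
  · obtain ⟨B, -, hB⟩ := exists_subset_card_eq (s := (univ : Finset (Fin k))) (n := k - 2) (by simp)
    refine Or.inl ⟨B, hB, fun S hS => mem_of_separated hclosed (fun h => ?_) fun w hw =>
      ⟨{w}ᶜ, by by_contra h; exact hone ⟨w, h⟩, subset_compl_singleton.2 hw, by simp⟩⟩
    have h1 := card_le_card hS
    rw [h, card_univ, Fintype.card_fin] at h1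
    omega
end
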